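/- Let d ≥ 1 and let n : ℝ^d → ℝ and u : ℝ^d → ℝ^d be C^∞ ℤ^d-periodic functions with n(x) > 0 for every x. Then ∫_{T^d} Σ_i ( Σ_j ∂_j( n ∂_j u_i ) ) ∂_i(log n) dx = 2 ∫_{T^d} n ∇( Δ√n / √n ) · u dx; that is, ∫_{T^d} div(n ∇u) · ∇ log n dx = 2 ∫_{T^d} n u · ∇( Δ√n / √n ) dx. -/

import Mathlib

open MeasureTheory

/-- The `i`-th partial derivative of `f : ℝ^d → ℝ`. -/
noncomputable def pd {d : ℕ} (i : Fin d) (f : (Fin d → ℝ) → ℝ) (x : Fin d → ℝ) : ℝ :=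
  fderiv ℝ f x (Pi.single i 1)

abbrev SmoothFn {d : ℕ} (f : (Fin d → ℝ) → ℝ) : Prop := ContDiff ℝ (⊤ : ℕ∞) f

def PerFn {d : ℕ} (f : (Fin d → ℝ) → ℝ) : Prop :=
  ∀ (z : Fin d → ℤ) (x : Fin d → ℝ), f (x + fun i => (z i : ℝ)) = f x

theorem SmoothFn.diffAt {d : ℕ} {f : (Fin d → ℝ) → ℝ} (hf : SmoothFn f) (x) :
    DifferentiableAt ℝ f x := (hf.differentiable (by simp)).differentiableAt

theorem SmoothFn.pd {d : ℕ} {f : (Fin d → ℝ) → ℝ} (hf : SmoothFn f) (i : Fin d) :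
    SmoothFn (pd i f) := by
  have : ContDiff ℝ (⊤ : ℕ∞) (fderiv ℝ f) := hf.fderiv_right (by simp)
  exact this.clm_apply contDiff_const

theorem PerFn.pd {d : ℕ} {f : (Fin d → ℝ) → ℝ} (hf : PerFn f) (i : Fin d) :
    PerFn (pd i f) := by
  intro z x
  unfold _root_.pd
  rw [← fderiv_comp_add_right]
  congr 2
  funext y
  exact hf z y

theorem pd_mul {d : ℕ} {f g : (Fin d → ℝ) → ℝ} (hf : SmoothFn f) (hg : SmoothFn g)
    (i : Fin d) (x) : pd i (fun y => f y * g y) x = pd i f x * g x + f x * pd i g x := by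
  unfold pd
  rw [fderiv_fun_mul (hf.diffAt x) (hg.diffAt x)]
  simp; ring

theorem pd_sub {d : ℕ} {f g : (Fin d → ℝ) → ℝ} (hf : SmoothFn f) (hg : SmoothFn g)
    (i : Fin d) (x) : pd i (fun y => f y - g y) x = pd i f x - pd i g x := by
  unfold pd
  rw [fderiv_fun_sub (hf.diffAt x) (hg.diffAt x)]
  simp

theorem pd_add {d : ℕ} {f g : (Fin d → ℝ) → ℝ} (hf : SmoothFn f) (hg : SmoothFn g)
    (i : Fin d) (x) : pd i (fun y => f y + g y) x = pd i f x + pd i g x := by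
  unfold pd
  rw [fderiv_fun_add (hf.diffAt x) (hg.diffAt x)]
  simp

theorem pd_const_mul {d : ℕ} {f : (Fin d → ℝ) → ℝ} (hf : SmoothFn f) (c : ℝ)
    (i : Fin d) (x) : pd i (fun y => c * f y) x = c * pd i f x := by
  unfold pd
  rw [fderiv_const_mul (hf.diffAt x)]
  simp

theorem pd_sum {d : ℕ} {f : Fin d → (Fin d → ℝ) → ℝ} (hf : ∀ j, SmoothFn (f j))
    (i : Fin d) (x) : pd i (fun y => ∑ j, f j y) x = ∑ j, pd i (f j) x := by
  unfold pd
  rw [fderiv_fun_sum (fun j _ => (hf j).diffAt x)]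
  simp

theorem pd_comm {d : ℕ} {f : (Fin d → ℝ) → ℝ} (hf : SmoothFn f) (i j : Fin d) (x) :
    pd i (pd j f) x = pd j (pd i f) x := by
  have hd : DifferentiableAt ℝ (fderiv ℝ f) x := by
    have : ContDiff ℝ (⊤ : ℕ∞) (fderiv ℝ f) := hf.fderiv_right (by simp)
    exact (this.differentiable (by simp)).differentiableAt
  have hs : IsSymmSndFDerivAt ℝ f x :=
    ContDiffAt.isSymmSndFDerivAt (hf.contDiffAt)
      (by rw [minSmoothness_of_isRCLikeNormedField]; exact WithTop.coe_le_coe.2 le_top)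
  have key : ∀ a b : Fin d, pd a (pd b f) x
      = fderiv ℝ (fderiv ℝ f) x (Pi.single a 1) (Pi.single b 1) := by
    intro a b
    show fderiv ℝ (fun y => fderiv ℝ f y (Pi.single b 1)) x (Pi.single a 1) = _
    rw [fderiv_clm_apply hd (differentiableAt_const _)]
    simp
  rw [key, key, hs.eq]

theorem integral_pd_eq_zero {d : ℕ} {g : (Fin d → ℝ) → ℝ} (hg : SmoothFn g) (hp : PerFn g)
    (j : Fin d) : ∫ x in Set.Icc (0 : Fin d → ℝ) 1, pd j g x = 0 := by
  obtain _ | m := d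
  · exact j.elim0
  have hcont : Continuous (pd j g) := (hg.pd j).continuous
  have H := integral_divergence_of_hasFDerivAt_off_countable' (0 : Fin (m+1) → ℝ) 1
    (by intro i; simp) (fun i x => if i = j then g x else 0)
    (fun i x => if i = j then fderiv ℝ g x else 0) ∅ Set.countable_empty
    (by
      intro i
      by_cases h : i = j
      · simpa [h] using hg.continuous.continuousOn
      · simpa [h] using continuousOn_const)
    (by
      intro x _ i
      by_cases h : i = j
      · simpa [h] using (hg.diffAt x).hasFDerivAt
      · simpa [h] using hasFDerivAt_const _ _)
  have e : ∀ x, (∑ i, (if i = j then fderiv ℝ g x else 0) (Pi.single i 1)) = pd j g x := by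
    intro x
    rw [Finset.sum_eq_single j]
    · simp [pd]
    · intro b _ hb; simp [hb]
    · simp
  simp only [e] at H
  rw [H hcont.continuousOn.integrableOn_Icc]
  apply Finset.sum_eq_zero
  intro i _
  rw [sub_eq_zero]
  congr 1
  funext x
  by_cases h : i = j
  · simp only [h, if_true, Pi.zero_apply, Pi.one_apply]
    have := hp (Pi.single j 1) (j.insertNth (0:ℝ) x)
    rw [← this]
    congr 1
    funext k
    refine Fin.succAboveCases j ?_ ?_ k <;> simp
  · simp [h]

/-- For smooth `ℤ^d`-periodic `n > 0` and `u`: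
`∫_{T^d} div(n ∇u) · ∇ log n = 2 ∫_{T^d} n u · ∇(Δ√n/√n)`. -/
theorem viscous_term_against_grad_log (d : ℕ) (hd : 1 ≤ d) (n : (Fin d → ℝ) → ℝ)
    (u : (Fin d → ℝ) → Fin d → ℝ)
    (hn : ContDiff ℝ (⊤ : ℕ∞) n) (hu : ContDiff ℝ (⊤ : ℕ∞) u) (hpos : ∀ x, 0 < n x)
    (hnper : ∀ (z : Fin d → ℤ) (x : Fin d → ℝ), n (x + fun i => (z i : ℝ)) = n x)
    (huper : ∀ (z : Fin d → ℤ) (x : Fin d → ℝ), u (x + fun i => (z i : ℝ)) = u x) :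
    (∫ x in Set.Icc (0 : Fin d → ℝ) 1, ∑ i : Fin d,
        (∑ j : Fin d, pd j (fun y => n y * pd j (fun z => u z i) y) x)
          * pd i (fun y => Real.log (n y)) x)
      = 2 * ∫ x in Set.Icc (0 : Fin d → ℝ) 1, ∑ i : Fin d,
          n x * pd i (fun y =>
            (∑ j : Fin d, pd j (pd j (fun z => Real.sqrt (n z))) y) / Real.sqrt (n y)) x
            * u x i := by
  have hnS : SmoothFn n := hn
  have hnP : PerFn n := hnper
  have huS : ∀ i, SmoothFn (fun z => u z i) := fun i => contDiff_pi.1 hu i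
  have huP : ∀ i, PerFn (fun z => u z i) := fun i z x => by simp only [huper z x]
  obtain ⟨L, hL⟩ : ∃ L, L = fun y => Real.log (n y) := ⟨_, rfl⟩
  have hLS : SmoothFn L := hL ▸ hnS.log (fun x => (hpos x).ne')
  have hLP : PerFn L := by
    intro z x; simp only [hL, hnper z x]
  obtain ⟨s, hs⟩ : ∃ s, s = fun z => Real.sqrt (n z) := ⟨_, rfl⟩
  have hsS : SmoothFn s := hs ▸ hnS.sqrt (fun x => (hpos x).ne')
  have hspos : ∀ x, 0 < s x := fun x => by rw [hs]; exact Real.sqrt_pos.2 (hpos x)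
  have hss : n = fun x => s x * s x := by
    funext x; rw [hs]; exact (Real.mul_self_sqrt (hpos x).le).symm
  -- derivatives of n and s in terms of L
  have hnL : ∀ j x, pd j n x = n x * pd j L x := by
    intro j x
    have : pd j L x = (n x)⁻¹ * pd j n x := by
      rw [hL]; unfold pd; rw [fderiv.log (hnS.diffAt x) (hpos x).ne']; simp
    rw [this]; field_simp [(hpos x).ne']
  have hsL : ∀ j, pd j s = fun x => s x * ((1/2) * pd j L x) := by
    intro j; funext x
    have h1 := hnL j x
    have h2 : pd j n x = pd j s x * s x + s x * pd j s x := by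
      conv_lhs => rw [hss]
      exact pd_mul hsS hsS j x
    have h3 : n x = s x * s x := congrFun hss x
    rw [h3] at h1
    have := (hspos x).ne'
    apply mul_left_cancel₀ this
    linarith
  have hQ : (fun y => (∑ j : Fin d, pd j (pd j s) y) / s y)
      = fun y => ∑ j : Fin d, ((1/2) * pd j (pd j L) y + (1/4) * (pd j L y * pd j L y)) := by
    funext y
    rw [Finset.sum_div]
    refine Finset.sum_congr rfl fun j _ => ?_
    rw [hsL j, pd_mul hsS (contDiff_const.mul (hLS.pd j)), pd_const_mul (hLS.pd j), hsL j]
    have := (hspos y).ne'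
    field_simp
    ring
  have hQd : ∀ i x, pd i (fun y => (∑ j : Fin d, pd j (pd j s) y) / s y) x
      = ∑ j : Fin d, ((1/2) * pd i (pd j (pd j L)) x + (1/2) * (pd j L x * pd i (pd j L) x)) := by
    intro i x
    rw [hQ, pd_sum (fun j => (contDiff_const.mul ((hLS.pd j).pd j)).add
      (contDiff_const.mul ((hLS.pd j).mul (hLS.pd j))))]
    refine Finset.sum_congr rfl fun j _ => ?_
    rw [pd_add (contDiff_const.mul ((hLS.pd j).pd j))
      (contDiff_const.mul ((hLS.pd j).mul (hLS.pd j))), pd_const_mul ((hLS.pd j).pd j),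
      pd_const_mul ((hLS.pd j).mul (hLS.pd j)), pd_mul (hLS.pd j) (hLS.pd j)]
    ring
  rw [← hs, ← hL]
  have hs' : ∀ y, Real.sqrt (n y) = s y := fun y => by rw [hs]
  simp only [hs', hQd]
  let G : Fin d → Fin d → (Fin d → ℝ) → ℝ := fun i j x =>
    n x * pd j (fun z => u z i) x * pd i L x - n x * pd j (pd i L) x * u x i
  have hG1 : ∀ i j, SmoothFn (fun x => n x * pd j (fun z => u z i) x * pd i L x) :=
    fun i j => (hnS.mul ((huS i).pd j)).mul (hLS.pd i)
  have hG2 : ∀ i j, SmoothFn (fun x => n x * pd j (pd i L) x * u x i) :=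
    fun i j => (hnS.mul ((hLS.pd i).pd j)).mul (huS i)
  have hGS : ∀ i j, SmoothFn (G i j) := fun i j => (hG1 i j).sub (hG2 i j)
  have hGP : ∀ i j, PerFn (G i j) := by
    intro i j z x
    simp only [G]
    rw [hnP z x, ((huP i).pd j) z x, (hLP.pd i) z x, ((hLP.pd i).pd j) z x, huper z x]
  have hGd : ∀ i j x, pd j (G i j) x =
      pd j (fun y => n y * pd j (fun z => u z i) y) x * pd i L x
      - 2 * (n x * ((1/2) * pd i (pd j (pd j L)) x + (1/2) * (pd j L x * pd i (pd j L) x))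
        * u x i) := by
    intro i j x
    have c1 : pd j (pd i L) = pd i (pd j L) := funext fun x => pd_comm hLS j i x
    have c2 := pd_comm (hLS.pd j) j i x
    simp only [G]
    rw [pd_sub (hG1 i j) (hG2 i j), pd_mul (hnS.mul ((huS i).pd j)) (hLS.pd i),
      pd_mul (hnS.mul ((hLS.pd i).pd j)) (huS i), pd_mul hnS ((hLS.pd i).pd j), c1, c2, hnL]
    ring
  rw [← integral_const_mul, ← sub_eq_zero, ← integral_sub]
  · have : ∀ x, (∑ i : Fin d,
        (∑ j : Fin d, pd j (fun y => n y * pd j (fun z => u z i) y) x) * pd i L x)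
        - 2 * (∑ i : Fin d, n x * (∑ j : Fin d, ((1/2) * pd i (pd j (pd j L)) x
          + (1/2) * (pd j L x * pd i (pd j L) x))) * u x i)
        = ∑ i, ∑ j, pd j (G i j) x := by
      intro x
      simp only [hGd, Finset.sum_sub_distrib, Finset.mul_sum, Finset.sum_mul]
    simp only [this]
    rw [integral_finsetSum]
    · refine Finset.sum_eq_zero fun i _ => ?_
      rw [integral_finsetSum]
      · exact Finset.sum_eq_zero fun j _ => integral_pd_eq_zero (hGS i j) (hGP i j) j
      · intro j _
        exact ((hGS i j).pd j).continuous.continuousOn.integrableOn_Icc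
    · intro i _
      exact (continuous_finsetSum _ fun j _ =>
        ((hGS i j).pd j).continuous).continuousOn.integrableOn_Icc
  · refine Continuous.integrableOn_Icc ?_
    exact continuous_finsetSum _ fun i _ => (continuous_finsetSum _ fun j _ =>
      (SmoothFn.pd (hnS.mul ((huS i).pd j)) j).continuous).mul (hLS.pd i).continuous
  · refine Continuous.integrableOn_Icc ?_
    refine continuous_const.mul (continuous_finsetSum _ fun i _ =>
      (hnS.continuous.mul (continuous_finsetSum _ fun j _ => ?_)).mul (huS i).continuous)
    exact (continuous_const.mul (((hLS.pd j).pd j).pd i).continuous).add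
      (continuous_const.mul ((hLS.pd j).continuous.mul ((hLS.pd j).pd i).continuous))
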